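/- Let G be a finite simple graph satisfying: (i) the cycles of G are pairwise vertex-disjoint; (ii) each cycle of G has length congruent to 1 modulo k; (iii) each connected component T of the graph Γ_G obtained by deleting all cycle vertices satisfies k | |V(T)| and T ∈ R^k_{|V(T)|/k}. Then α_k(G) = ((k−1)/k)·(n − ω(G)). -/

import Mathlib

/-!
Write `ω` for `cycleDim G`. Any graph has a generalized `k`-independent set whose complement has at
most `ω + (n - ω) / k` vertices. Choose `ω` edges whose removal leaves a forest, and delete one end
of each. The forest that remains is cut greedily: a minimal branch with at least `k` vertices falls
apart into pieces with fewer than `k` vertices once its root is deleted, so each deleted root pays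
for `k` vertices.

Under the hypotheses of the theorem, no generalized `k`-independent set `S` has a smaller
complement. Disjoint cycles number at least `ω`, since deleting one edge from each leaves a forest,
and `S` misses some vertex `v_C` of each cycle `C`. All vertices other than the `v_C` can be
partitioned into connected sets of size `k`: each path `C - v_C` has a multiple of `k` vertices, and
the rest is `Γ_G`, whose components are assembled from `k`-vertex trees. As `S` misses a vertex of
each part, its complement has at least `q + (n - q) / k` vertices, where `q ≥ ω` is the number of
cycles.
-/

open SimpleGraph

/-- A set `S` is a generalized `k`-independent set in `G` if the induced subgraph `G[S]`
contains no tree on `k` vertices, equivalently every connected component of `G[S]`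
has at most `k - 1` vertices. -/
def IsGenKIndep {V : Type*} (G : SimpleGraph V) (k : ℕ) (S : Set V) : Prop :=
  ∀ c : (G.induce S).ConnectedComponent, Nat.card c.supp ≤ k - 1

/-- The generalized `k`-independence number: the maximum size of a generalized
`k`-independent set. -/
noncomputable def alphaK {V : Type*} (G : SimpleGraph V) (k : ℕ) : ℕ :=
  sSup {m | ∃ S : Set V, IsGenKIndep G k S ∧ S.ncard = m}

/-- The dimension of the cycle space: `|E| - |V| + c(G)` (as a natural number;
note `|E| + c(G) ≥ |V|` always holds). -/
noncomputable def cycleDim {V : Type*} (G : SimpleGraph V) : ℕ :=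
  Nat.card G.edgeSet + Nat.card G.ConnectedComponent - Nat.card V

/-- `x` lies on a cycle of `G`. -/
def OnCycle {V : Type*} (G : SimpleGraph V) (x : V) : Prop :=
  ∃ (u : V) (w : G.Walk u u), w.IsCycle ∧ x ∈ w.support

/-- The cycles of `G` are pairwise vertex-disjoint: any two cycles sharing a vertex
have the same edge set, i.e. are the same cycle. -/
def CyclesPairwiseDisjoint {V : Type*} (G : SimpleGraph V) : Prop :=
  ∀ (u v : V) (w₁ : G.Walk u u) (w₂ : G.Walk v v), w₁.IsCycle → w₂.IsCycle →
    (∃ x, x ∈ w₁.support ∧ x ∈ w₂.support) → {e | e ∈ w₁.edges} = {e | e ∈ w₂.edges}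

/-- `InRk G k i S` says that the induced subgraph of `G` on `S` belongs to the
family `R_i^k`: it is obtained by attaching `i` `k`-vertex trees one by one,
each joined to the previous part by a single edge. -/
inductive InRk {V : Type*} (G : SimpleGraph V) (k : ℕ) : ℕ → Set V → Prop
  | base (S : Set V) (hcard : S.ncard = k) (htree : (G.induce S).IsTree) : InRk G k 1 S
  | step (i : ℕ) (S B : Set V) (hS : InRk G k i S) (hdisj : Disjoint S B)
      (hcard : B.ncard = k) (htree : (G.induce B).IsTree)
      (hone : ∃! p : V × V, p.1 ∈ S ∧ p.2 ∈ B ∧ G.Adj p.1 p.2) :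
      InRk G k (i + 1) (S ∪ B)

section Induce

variable {V W : Type*} {G : SimpleGraph V} {H : SimpleGraph W}

theorem preconnected_induce_image {s : Set W} (hs : (H.induce s).Preconnected) (f : H →g G) :
    (G.induce (f '' s)).Preconnected :=
  hs.map (induceHom f (Set.mapsTo_image f s)) fun ⟨_, x, hx, hxy⟩ ↦ ⟨⟨x, hx⟩, Subtype.ext hxy⟩

theorem preconnected_induce_of_isChain {l : List V} (hl : l.IsChain G.Adj) :
    (G.induce {x | x ∈ l}).Preconnected := by
  rcases eq_or_ne l [] with rfl | hne
  · rintro ⟨_, hx⟩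
    cases hx
  · have hconn := (Walk.ofSupport l hne hl).connected_induce_support.preconnected
    rwa [Walk.support_ofSupport] at hconn

theorem preconnected_induce_image_supp {s : Set V} (c : (G.induce s).ConnectedComponent) :
    (G.induce (Subtype.val '' c.supp)).Preconnected :=
  preconnected_induce_image c.connected_toSimpleGraph.preconnected (Embedding.induce s).toHom

theorem mem_image_supp_of_adj {s : Set V} (c : (G.induce s).ConnectedComponent) {x y : V}
    (hx : x ∈ Subtype.val '' c.supp) (hy : y ∈ s) (hxy : G.Adj x y) :
    y ∈ Subtype.val '' c.supp := by
  obtain ⟨x, hx, rfl⟩ := hx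
  have hadj : (G.induce s).Adj ⟨y, hy⟩ x := hxy.symm
  exact ⟨⟨y, hy⟩, (ConnectedComponent.connectedComponentMk_eq_of_adj hadj).trans hx, rfl⟩

theorem subset_or_subset_of_preconnected_induce {s t r : Set V}
    (hr : (G.induce r).Preconnected) (hrst : r ⊆ s ∪ t)
    (hst : ∀ x ∈ s, ∀ y ∈ t, G.Adj x y → y ∈ s) : r ⊆ s ∨ r ⊆ t := by
  by_contra! h
  obtain ⟨⟨y, hyr, hys⟩, x, hxr, hxt⟩ := h.imp Set.not_subset.mp Set.not_subset.mp
  have hxs : x ∈ s := (hrst hxr).resolve_right hxt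
  obtain ⟨p⟩ := hr ⟨x, hxr⟩ ⟨y, hyr⟩
  obtain ⟨d, -, hd₁, hd₂⟩ := p.exists_boundary_dart (Subtype.val ⁻¹' s) hxs hys
  exact hd₂ (hst _ hd₁ _ ((hrst d.snd.2).resolve_left hd₂) d.adj)

theorem eq_of_adj_of_preconnected_induce (hG : G.IsAcyclic) {s : Set V}
    (hs : (G.induce s).Preconnected) {v a b : V} (hv : v ∉ s) (ha : a ∈ s) (hb : b ∈ s)
    (hva : G.Adj v a) (hvb : G.Adj v b) : a = b := by
  obtain ⟨p, hp⟩ := (hs ⟨a, ha⟩ ⟨b, hb⟩).exists_isPath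
  obtain ⟨q, hq, hqs⟩ : ∃ q : G.Walk a b, q.IsPath ∧ ∀ x ∈ q.support, x ∈ s := by
    refine ⟨p.map (Embedding.induce s).toHom, hp.map Subtype.val_injective, fun x hx ↦ ?_⟩
    obtain ⟨y, -, rfl⟩ := List.mem_map.mp (Walk.support_map _ p ▸ hx)
    exact y.2
  have hvq : (Walk.cons hva q).IsPath := hq.cons fun h ↦ hv (hqs v h)
  simpa using (hG.eq_snd_of_adj_start hvq hvb (by simp)).symm

end Induce

section GenKIndep

variable {V : Type*} {G H : SimpleGraph V} {k : ℕ} {S T A B : Set V} {v : V}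

theorem isGenKIndep_iff [Finite V] (hk : 0 < k) :
    IsGenKIndep G k S ↔ ∀ T ⊆ S, (G.induce T).Preconnected → T.ncard < k := by
  have ncard_supp (c : (G.induce S).ConnectedComponent) :
      (Subtype.val '' c.supp).ncard = Nat.card c.supp :=
    (Set.ncard_image_of_injective _ Subtype.val_injective).trans (Nat.card_coe_set_eq _).symm
  refine ⟨fun hS T hTS hT ↦ ?_, fun h c ↦ Nat.le_sub_one_of_lt ?_⟩
  · rcases T.eq_empty_or_nonempty with rfl | ⟨x, hx⟩
    · simpa using hk
    let c := (G.induce S).connectedComponentMk ⟨x, hTS hx⟩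
    have hTc : T ⊆ Subtype.val '' c.supp := fun y hy ↦
      ⟨⟨y, hTS hy⟩, ConnectedComponent.sound
        ((hT ⟨y, hy⟩ ⟨x, hx⟩).map (induceHomOfLE G hTS).toHom), rfl⟩
    have hle := (Set.ncard_le_ncard hTc).trans_eq (ncard_supp c)
    have hc := hS c
    omega
  · rw [← ncard_supp]
    exact h _ (Subtype.coe_image_subset S c.supp) (preconnected_induce_image_supp c)

theorem IsGenKIndep.of_induce_le [Finite V] (hk : 0 < k) (hS : IsGenKIndep H k S)
    (hGH : G.induce S ≤ H.induce S) : IsGenKIndep G k S := by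
  rw [isGenKIndep_iff hk] at hS ⊢
  exact fun T hTS hT ↦ hS T hTS
    (hT.mono fun x y hxy ↦ @hGH ⟨x, hTS x.2⟩ ⟨y, hTS y.2⟩ hxy)

theorem IsGenKIndep.union [Finite V] (hk : 0 < k) (hS : IsGenKIndep G k S)
    (hT : IsGenKIndep G k T) (hST : ∀ x ∈ S, ∀ y ∈ T, G.Adj x y → y ∈ S) :
    IsGenKIndep G k (S ∪ T) := by
  rw [isGenKIndep_iff hk] at *
  intro R hR hconn
  rcases subset_or_subset_of_preconnected_induce hconn hR hST with h | h
  exacts [hS R h hconn, hT R h hconn]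

theorem IsGenKIndep.alphaK_eq_ncard [Finite V] (hS : IsGenKIndep G k S)
    (hmin : ∀ T, IsGenKIndep G k T → Sᶜ.ncard ≤ Tᶜ.ncard) : alphaK G k = S.ncard := by
  refine IsGreatest.csSup_eq ⟨⟨S, hS, rfl⟩, ?_⟩
  rintro _ ⟨T, hT, rfl⟩
  have hle := hmin T hT
  have hS_card := Set.ncard_add_ncard_compl S
  have hT_card := Set.ncard_add_ncard_compl T
  omega

/-- `B` is a branch of `G[A]` at `v`: the edges of `G[A]` leaving `B` all start at `v`. In a rooted
tree, the vertex `v` together with its descendants is an example. -/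
structure IsBranch (G : SimpleGraph V) (A B : Set V) (v : V) : Prop where
  mem : v ∈ B
  subset : B ⊆ A
  mem_of_adj : ∀ x ∈ B, x ≠ v → ∀ y ∈ A, G.Adj x y → y ∈ B

theorem isBranch_self (hv : v ∈ A) : IsBranch G A A v :=
  ⟨hv, subset_rfl, fun _ _ _ _ hy _ ↦ hy⟩

theorem IsBranch.exists_isBranch_image_supp (hB : IsBranch G A B v) (hG : G.IsAcyclic)
    (c : (G.induce (B \ {v})).ConnectedComponent) :
    ∃ u, IsBranch G A (Subtype.val '' c.supp) u := by
  set K : Set V := Subtype.val '' c.supp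
  have hKB : K ⊆ B \ {v} := Subtype.coe_image_subset _ _
  have hvK : v ∉ K := fun h ↦ (hKB h).2 rfl
  obtain ⟨u, huK, hu⟩ : ∃ u ∈ K, ∀ x ∈ K, G.Adj v x → x = u := by
    by_cases hv : ∃ u ∈ K, G.Adj v u
    · obtain ⟨u, huK, hvu⟩ := hv
      exact ⟨u, huK, fun x hx hvx ↦ eq_of_adj_of_preconnected_induce hG
        (preconnected_induce_image_supp c) hvK hx huK hvx hvu⟩
    · push Not at hv
      obtain ⟨u, huK⟩ := c.nonempty_supp.image Subtype.val
      exact ⟨u, huK, fun x hx hvx ↦ absurd hvx (hv x hx)⟩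
  refine ⟨u, huK, fun x hx ↦ hB.subset (hKB hx).1, fun x hx hxu y hyA hxy ↦ ?_⟩
  have hyB : y ∈ B := hB.mem_of_adj x (hKB hx).1 (hKB hx).2 y hyA hxy
  refine mem_image_supp_of_adj c hx ⟨hyB, ?_⟩ hxy
  rintro rfl
  exact hxu (hu x hx hxy.symm)

theorem exists_isBranch_isGenKIndep_sdiff_singleton [Finite V] (hG : G.IsAcyclic) (hk : 0 < k)
    (hA : k ≤ A.ncard) :
    ∃ B v, IsBranch G A B v ∧ k ≤ B.ncard ∧ IsGenKIndep G k (B \ {v}) := by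
  obtain ⟨a, ha⟩ : A.Nonempty := Set.nonempty_of_ncard_ne_zero (by omega)
  obtain ⟨B, ⟨hkB, v, hB⟩, hmin⟩ := exists_minimal_of_wellFoundedLT
    (fun B ↦ k ≤ B.ncard ∧ ∃ v, IsBranch G A B v) ⟨A, hA, a, isBranch_self ha⟩
  refine ⟨B, v, hB, hkB, fun c ↦ Nat.le_sub_one_of_lt ?_⟩
  by_contra! hc
  rw [← Nat.card_image_of_injective Subtype.val_injective, Nat.card_coe_set_eq] at hc
  have hKB : Subtype.val '' c.supp ⊆ B \ {v} := Subtype.coe_image_subset _ _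
  have hBK := hmin ⟨hc, hB.exists_isBranch_image_supp hG c⟩ (hKB.trans Set.sdiff_subset)
  exact (hKB (hBK hB.mem)).2 rfl

theorem exists_isGenKIndep_sdiff_of_isAcyclic [Finite V] (hG : G.IsAcyclic) (hk : 0 < k)
    (A : Set V) : ∃ D ⊆ A, k * D.ncard ≤ A.ncard ∧ IsGenKIndep G k (A \ D) := by
  induction hn : A.ncard using Nat.strong_induction_on generalizing A with | _ n ih
  subst hn
  rcases lt_or_ge A.ncard k with hA | hA
  · refine ⟨∅, A.empty_subset, by simp, ?_⟩
    rw [Set.sdiff_empty, isGenKIndep_iff hk]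
    exact fun T hTA _ ↦ (Set.ncard_le_ncard hTA).trans_lt hA
  obtain ⟨B, v, hB, hkB, hBv⟩ := exists_isBranch_isGenKIndep_sdiff_singleton hG hk hA
  have hcard : (A \ B).ncard + B.ncard = A.ncard := Set.ncard_sdiff_add_ncard_of_subset hB.subset
  obtain ⟨D, hDA, hDcard, hD⟩ := ih _ (by omega) (A \ B) rfl
  refine ⟨insert v D, Set.insert_subset (hB.subset hB.mem) (hDA.trans Set.sdiff_subset), ?_, ?_⟩
  · calc k * (insert v D).ncard ≤ k * (D.ncard + 1) := by gcongr; exact Set.ncard_insert_le v D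
      _ ≤ A.ncard := by rw [mul_add_one]; omega
  · have hunion : A \ insert v D = B \ {v} ∪ (A \ B) \ D := by
      ext x
      have hxB : x ∈ B → x ∈ A := @hB.subset x
      have hxD : x ∈ D → x ∉ B := fun h ↦ (hDA h).2
      have hvx : x = v → x ∈ B := fun h ↦ h ▸ hB.mem
      simp only [Set.mem_sdiff, Set.mem_insert_iff, Set.mem_union, Set.mem_singleton_iff]
      tauto
    rw [hunion]
    refine hBv.union hk hD fun x hx y hy hxy ↦ ?_
    exact absurd (hB.mem_of_adj x hx.1 hx.2 y hy.1.1 hxy) hy.1.2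

end GenKIndep

section Tiling

/-- `T` is a disjoint union of `k`-element vertex sets that each induce a connected subgraph of
`G`. -/
inductive IsTiled {V : Type*} (G : SimpleGraph V) (k : ℕ) : Set V → Prop
  | empty : IsTiled G k ∅
  | union_tile {T B : Set V} (hT : IsTiled G k T) (hdisj : Disjoint T B) (hcard : B.ncard = k)
      (hconn : (G.induce B).Preconnected) : IsTiled G k (T ∪ B)

variable {V W : Type*} {G : SimpleGraph V} {H : SimpleGraph W} {k : ℕ} {S T B : Set V}

theorem isTiled_of_ncard_eq (hcard : B.ncard = k) (hconn : (G.induce B).Preconnected) :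
    IsTiled G k B := by
  simpa using IsTiled.empty.union_tile (Set.empty_disjoint B) hcard hconn

theorem IsTiled.union (hS : IsTiled G k S) (hT : IsTiled G k T) (hST : Disjoint S T) :
    IsTiled G k (S ∪ T) := by
  induction hT with
  | empty => simpa using hS
  | union_tile _ hdisj hcard hconn ih =>
    rw [Set.disjoint_union_right] at hST
    rw [← Set.union_assoc]
    exact (ih hST.1).union_tile (hST.2.union_left hdisj) hcard hconn

theorem isTiled_iUnion {ι : Type*} [Finite ι] {f : ι → Set V} (hf : ∀ i, IsTiled G k (f i))
    (hdisj : Pairwise (Function.onFun Disjoint f)) : IsTiled G k (⋃ i, f i) := by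
  classical
  have := Fintype.ofFinite ι
  suffices ∀ s : Finset ι, IsTiled G k (⋃ i ∈ s, f i) by simpa using this Finset.univ
  intro s
  induction s using Finset.induction_on with
  | empty => simpa using IsTiled.empty
  | insert i s hi ih =>
    rw [Finset.set_biUnion_insert]
    refine (hf i).union ih (Set.disjoint_iUnion₂_right.mpr fun j hj ↦ hdisj ?_)
    rintro rfl
    exact hi hj

theorem IsTiled.image {T : Set W} (hT : IsTiled H k T) (f : H →g G) (hf : Function.Injective f) :
    IsTiled G k (f '' T) := by
  induction hT with
  | empty => simpa using IsTiled.empty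
  | union_tile _ hdisj hcard hconn ih =>
    rw [Set.image_union]
    exact ih.union_tile ((Set.disjoint_image_iff hf).mpr hdisj)
      ((Set.ncard_image_of_injective _ hf).trans hcard) (preconnected_induce_image hconn f)

theorem IsTiled.of_induce (h : IsTiled (G.induce S) k Set.univ) : IsTiled G k S := by
  have himage : IsTiled G k (Subtype.val '' Set.univ) :=
    h.image (Embedding.induce S).toHom Subtype.val_injective
  rwa [Subtype.coe_image_univ] at himage

theorem InRk.isTiled {i : ℕ} (hT : InRk G k i T) : IsTiled G k T := by
  induction hT with
  | base T hcard htree => exact isTiled_of_ncard_eq hcard htree.connected.preconnected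
  | step _ T B _ hdisj hcard htree _ ih =>
    exact ih.union_tile hdisj hcard htree.connected.preconnected

theorem isTiled_univ_of_forall_supp [Finite G.ConnectedComponent]
    (h : ∀ c : G.ConnectedComponent, IsTiled G k c.supp) : IsTiled G k Set.univ :=
  G.iUnion_connectedComponentSupp ▸ isTiled_iUnion h G.pairwise_disjoint_supp_connectedComponent

theorem isTiled_of_isChain {l : List V} (hl : l.IsChain G.Adj) (hnd : l.Nodup)
    (hk : k ∣ l.length) : IsTiled G k {x | x ∈ l} := by
  classical
  obtain ⟨m, hm⟩ := hk
  induction m generalizing l with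
  | zero =>
    obtain rfl : l = [] := by simpa using hm
    simpa using IsTiled.empty
  | succ m ih =>
    rw [mul_add_one] at hm
    have hcard : {x | x ∈ l.take k}.ncard = k := by
      rw [← List.coe_toFinset, Set.ncard_coe_finset, List.toFinset_card_of_nodup
        (hnd.sublist (List.take_sublist _ _)), List.length_take]
      omega
    have hdrop := ih (hl.drop k) (hnd.sublist (List.drop_sublist _ _)) (by simp [hm])
    have hdisj : Disjoint {x | x ∈ l.drop k} {x | x ∈ l.take k} := by
      rw [Set.disjoint_left]
      exact fun x hd ht ↦ List.disjoint_take_drop hnd le_rfl ht hd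
    convert hdrop.union_tile hdisj hcard (preconnected_induce_of_isChain (hl.take k)) using 1
    ext x
    have hx : x ∈ l ↔ x ∈ l.take k ∨ x ∈ l.drop k := by
      rw [← List.mem_append, List.take_append_drop]
    exact hx.trans or_comm

theorem IsTiled.ncard_le [Finite V] (hk : 0 < k) (hT : IsTiled G k T) (hS : IsGenKIndep G k S) :
    T.ncard ≤ k * (T \ S).ncard := by
  induction hT with
  | empty => simp
  | @union_tile T B _ hdisj hcard hconn ih =>
    have hB : (B \ S).Nonempty := by
      rw [Set.sdiff_nonempty]
      exact fun hBS ↦ ((isGenKIndep_iff hk).mp hS B hBS hconn).ne hcard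
    rw [Set.union_sdiff_distrib, Set.ncard_union_eq hdisj,
      Set.ncard_union_eq (hdisj.mono Set.sdiff_subset Set.sdiff_subset), mul_add, hcard]
    exact add_le_add ih (Nat.le_mul_of_pos_right k hB.ncard_pos)

end Tiling

section CycleDim

variable {V : Type*} {G : SimpleGraph V} {k : ℕ}

theorem bijective_sigma_mapEdgeSet_toSimpleGraph_hom (G : SimpleGraph V) :
    Function.Bijective fun e : Σ c : G.ConnectedComponent, c.toSimpleGraph.edgeSet ↦
      e.1.toSimpleGraph_hom.mapEdgeSet e.2 := by
  constructor
  · rintro ⟨c, e, he⟩ ⟨c', e', he'⟩ h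
    have hval : Sym2.map Subtype.val e = Sym2.map Subtype.val e' := congrArg Subtype.val h
    obtain rfl : c = c' := by
      obtain ⟨x, hx⟩ : ∃ x, x ∈ e := ⟨_, Sym2.out_fst_mem e⟩
      obtain ⟨x', -, hx'⟩ := Sym2.mem_map.mp (hval ▸ Sym2.mem_map.mpr ⟨x, hx, rfl⟩)
      exact x.2.symm.trans (hx' ▸ x'.2)
    obtain rfl : e = e' := Sym2.map.injective Subtype.val_injective hval
    rfl
  · rintro ⟨e, he⟩
    induction e with | _ x y
    refine ⟨⟨G.connectedComponentMk x, s(⟨x, rfl⟩, ⟨y, ?_⟩), he⟩, rfl⟩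
    exact (ConnectedComponent.connectedComponentMk_eq_of_adj he).symm

theorem card_edgeSet_eq_sum_connectedComponent [Finite V] [Fintype G.ConnectedComponent] :
    Nat.card G.edgeSet = ∑ c : G.ConnectedComponent, Nat.card c.toSimpleGraph.edgeSet := by
  rw [← Nat.card_sigma,
    Nat.card_eq_of_bijective _ (bijective_sigma_mapEdgeSet_toSimpleGraph_hom G)]

theorem card_eq_sum_connectedComponent [Finite V] [Fintype G.ConnectedComponent] :
    Nat.card V = ∑ c : G.ConnectedComponent, Nat.card c := by
  rw [← Nat.card_sigma]
  exact (Nat.card_congr (Equiv.sigmaFiberEquiv G.connectedComponentMk)).symm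

theorem card_edgeSet_add_card_connectedComponent_of_isAcyclic [Finite V] (hG : G.IsAcyclic) :
    Nat.card G.edgeSet + Nat.card G.ConnectedComponent = Nat.card V := by
  have := Fintype.ofFinite G.ConnectedComponent
  calc Nat.card G.edgeSet + Nat.card G.ConnectedComponent
      = ∑ c : G.ConnectedComponent, (Nat.card c.toSimpleGraph.edgeSet + 1) := by
        rw [card_edgeSet_eq_sum_connectedComponent, Finset.sum_add_distrib, Finset.sum_const,
          Finset.card_univ, smul_eq_mul, mul_one, Nat.card_eq_fintype_card]
    _ = ∑ c : G.ConnectedComponent, Nat.card c := Finset.sum_congr rfl fun c _ ↦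
        (isTree_iff_connected_and_card.mp (hG.isTree_connectedComponent c)).2
    _ = Nat.card V := card_eq_sum_connectedComponent.symm

theorem exists_isAcyclic_deleteEdges [Finite V] (G : SimpleGraph V) :
    ∃ s : Set (Sym2 V), s.ncard = cycleDim G ∧ (G.deleteEdges s).IsAcyclic := by
  obtain ⟨F, hFG, hF, hreach⟩ := G.exists_isAcyclic_reachable_eq_le
  refine ⟨G.edgeSet \ F.edgeSet, ?_, by rwa [deleteEdges_sdiff_eq_of_le hFG]⟩
  have hconn : Nat.card F.ConnectedComponent = Nat.card G.ConnectedComponent :=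
    congrArg (fun r ↦ Nat.card (Quot r)) hreach
  rw [Set.ncard_sdiff (edgeSet_mono hFG), cycleDim,
    ← card_edgeSet_add_card_connectedComponent_of_isAcyclic hF, hconn, Nat.add_sub_add_right,
    Nat.card_coe_set_eq, Nat.card_coe_set_eq]

theorem cycleDim_le_ncard_of_isAcyclic_deleteEdges [Finite V] {s : Set (Sym2 V)}
    (hs : (G.deleteEdges s).IsAcyclic) : cycleDim G ≤ s.ncard := by
  have hcard := card_edgeSet_add_card_connectedComponent_of_isAcyclic hs
  have hconn := ConnectedComponent.card_le_card_of_le (G.deleteEdges_le s)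
  have hedge := Set.ncard_le_ncard_sdiff_add_ncard G.edgeSet s
  rw [edgeSet_deleteEdges, Nat.card_coe_set_eq] at hcard
  rw [cycleDim, Nat.card_coe_set_eq]
  omega

theorem exists_ncard_le_forall_exists_mem {s : Set (Sym2 V)} (hs : s.Finite) :
    ∃ X : Set V, X.ncard ≤ s.ncard ∧ ∀ e ∈ s, ∃ x ∈ X, x ∈ e :=
  ⟨(fun e ↦ e.out.1) '' s, Set.ncard_image_le hs, fun e he ↦
    ⟨e.out.1, Set.mem_image_of_mem _ he, e.out_fst_mem⟩⟩

theorem exists_isGenKIndep_mul_ncard_compl_add_cycleDim_le [Finite V] (G : SimpleGraph V)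
    (hk : 0 < k) :
    ∃ S, IsGenKIndep G k S ∧
      k * Sᶜ.ncard + cycleDim G ≤ Nat.card V + k * cycleDim G := by
  obtain ⟨s, hs, hF⟩ := exists_isAcyclic_deleteEdges G
  obtain ⟨X, hXs, hX⟩ := exists_ncard_le_forall_exists_mem s.toFinite
  obtain ⟨D, -, hD, hS⟩ := exists_isGenKIndep_sdiff_of_isAcyclic hF hk Xᶜ
  have hle : G.induce (Xᶜ \ D) ≤ (G.deleteEdges s).induce (Xᶜ \ D) := fun x y hxy ↦ by
    refine deleteEdges_adj.mpr ⟨hxy, fun he ↦ ?_⟩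
    obtain ⟨z, hzX, hz⟩ := hX _ he
    rcases Sym2.mem_iff.mp hz with rfl | rfl
    exacts [x.2.1 hzX, y.2.1 hzX]
  refine ⟨Xᶜ \ D, hS.of_induce_le hk hle, ?_⟩
  have hcompl : (Xᶜ \ D)ᶜ.ncard ≤ X.ncard + D.ncard := by
    rw [Set.compl_sdiff, compl_compl, Set.union_comm]
    exact Set.ncard_union_le X D
  have hX' := Set.ncard_add_ncard_compl X
  obtain ⟨m, rfl⟩ := Nat.exists_eq_add_of_le' hk
  nlinarith

end CycleDim

section Cycles

variable {V : Type*} {G : SimpleGraph V} {k : ℕ} {S C C' : Set V}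

/-- The vertex sets of the cycles of `G`. If the cycles of `G` are pairwise vertex-disjoint, then
these sets correspond to the cycles themselves. -/
def cycleSupports (G : SimpleGraph V) : Set (Set V) :=
  {C | ∃ (u : V) (w : G.Walk u u), w.IsCycle ∧ {x | x ∈ w.support} = C}

theorem onCycle_iff_exists_mem_cycleSupports {x : V} :
    OnCycle G x ↔ ∃ C ∈ cycleSupports G, x ∈ C := by
  constructor
  · rintro ⟨u, w, hw, hx⟩
    exact ⟨_, ⟨u, w, hw, rfl⟩, hx⟩
  · rintro ⟨_, ⟨u, w, hw, rfl⟩, hx⟩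
    exact ⟨u, w, hw, hx⟩

theorem CyclesPairwiseDisjoint.pairwiseDisjoint_cycleSupports (hG : CyclesPairwiseDisjoint G) :
    (cycleSupports G).PairwiseDisjoint id := by
  rintro _ ⟨u, w, hw, rfl⟩ _ ⟨u', w', hw', rfl⟩ hne
  refine Set.disjoint_left.mpr fun x hx hx' ↦ hne ?_
  have hedges := Set.ext_iff.mp (hG u u' w w' hw hw' ⟨x, hx, hx'⟩)
  ext y
  simp only [Set.mem_ofPred_eq, Walk.mem_support_iff_exists_mem_edges_of_not_nil hw.not_nil,
    Walk.mem_support_iff_exists_mem_edges_of_not_nil hw'.not_nil] at hedges ⊢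
  simp only [hedges]

theorem CyclesPairwiseDisjoint.exists_forall_mem_edges (hG : CyclesPairwiseDisjoint G)
    (hC : C ∈ cycleSupports G) :
    ∃ e, ∀ (u : V) (w : G.Walk u u), w.IsCycle → {x | x ∈ w.support} = C → e ∈ w.edges := by
  obtain ⟨v, w', hw', rfl⟩ := hC
  obtain ⟨e, he, -⟩ := (Walk.mem_support_iff_exists_mem_edges_of_not_nil hw'.not_nil).mp
    w'.start_mem_support
  refine ⟨e, fun u w hw hsupp ↦ ?_⟩
  exact (Set.ext_iff.mp (hG v u w' w hw' hw ⟨v, w'.start_mem_support,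
    (Set.ext_iff.mp hsupp v).mpr w'.start_mem_support⟩) e).mp he

theorem CyclesPairwiseDisjoint.cycleDim_le_card_cycleSupports [Finite V]
    (hG : CyclesPairwiseDisjoint G) : cycleDim G ≤ Nat.card (cycleSupports G) := by
  choose e he using fun C : cycleSupports G ↦ hG.exists_forall_mem_edges C.2
  suffices (G.deleteEdges (Set.range e)).IsAcyclic from
    (cycleDim_le_ncard_of_isAcyclic_deleteEdges this).trans (Finite.card_range_le e)
  intro u w hw
  have hle := G.deleteEdges_le (Set.range e)
  have hmem := he ⟨_, u, w.mapLe hle, hw.mapLe hle, rfl⟩ u _ (hw.mapLe hle) rfl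
  rw [Walk.edges_mapLe_eq_edges] at hmem
  have hadj := w.edges_subset_edgeSet hmem
  rw [edgeSet_deleteEdges] at hadj
  exact hadj.2 ⟨_, rfl⟩

theorem isTiled_support_sdiff_singleton {u v : V} {w : G.Walk u u} (hw : w.IsCycle)
    (hv : v ∈ w.support) (hk : k ∣ w.length - 1) :
    IsTiled G k ({x | x ∈ w.support} \ {v}) := by
  classical
  have hw' := hw.rotate hv
  set p := (w.rotate v hv).dropLast
  obtain ⟨l, hl⟩ : ∃ l, p.support = v :: l := ⟨_, p.cons_tail_support.symm⟩
  have hchain : (v :: l).IsChain G.Adj := hl ▸ p.isChain_adj_support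
  have hnodup : (v :: l).Nodup := hl ▸ hw'.isPath_dropLast.support_nodup
  have hlen : l.length = w.length - 1 := by
    have hp : l.length = p.length := by simpa [hl] using p.length_support
    rw [hp, ← w.length_rotate v hv, ← Walk.length_dropLast_add_one hw'.not_nil, Nat.add_sub_cancel]
  convert isTiled_of_isChain hchain.tail hnodup.tail (hlen ▸ hk) using 1
  ext x
  have hvl : v ∉ l := (List.nodup_cons.mp hnodup).1
  have hx : x ∈ w.support ↔ x ∈ v :: l ++ [v] := by
    rw [← w.mem_support_rotate_iff v hv, ← Walk.support_dropLast_concat hw'.not_nil, hl]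
  simp only [Set.mem_sdiff, Set.mem_ofPred_eq, Set.mem_singleton_iff, hx, List.mem_append,
    List.mem_cons, List.not_mem_nil, or_false, List.tail_cons]
  grind

theorem IsGenKIndep.exists_mem_support_notMem [Finite V] (hk : 0 < k) (hS : IsGenKIndep G k S)
    {u : V} {w : G.Walk u u} (hw : w.IsCycle) (hlen : k ∣ w.length - 1) :
    ∃ x ∈ w.support, x ∉ S := by
  have hT := isTiled_support_sdiff_singleton hw w.start_mem_support hlen
  have hsnd : w.snd ∈ {x | x ∈ w.support} \ {u} :=
    ⟨w.getVert_mem_support 1, (w.adj_snd hw.not_nil).ne'⟩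
  have hpos := (Set.ncard_pos (Set.toFinite _) |>.mpr ⟨_, hsnd⟩).trans_le (hT.ncard_le hk hS)
  obtain ⟨x, hx, hxS⟩ := Set.nonempty_of_ncard_ne_zero (Nat.pos_of_mul_pos_left hpos).ne'
  exact ⟨x, hx.1, hxS⟩

theorem CyclesPairwiseDisjoint.isTiled_compl_range [Finite V] (hG : CyclesPairwiseDisjoint G)
    (hlen : ∀ (u : V) (w : G.Walk u u), w.IsCycle → k ∣ w.length - 1)
    (hΓ : IsTiled G k {v | ¬ OnCycle G v}) {f : cycleSupports G → V} (hf : ∀ C, f C ∈ C.1) :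
    IsTiled G k (Set.range f)ᶜ := by
  have hcycle (C : cycleSupports G) : IsTiled G k (C.1 \ {f C}) := by
    obtain ⟨u, w, hw, hC⟩ := C.2
    rw [← hC]
    exact isTiled_support_sdiff_singleton hw (hC.symm.subset (hf C)) (hlen u w hw)
  have hdisj : Pairwise (Function.onFun Disjoint fun C : cycleSupports G ↦ C.1 \ {f C}) :=
    fun C C' h ↦ (hG.pairwiseDisjoint_cycleSupports C.2 C'.2 (Subtype.coe_ne_coe.mpr h)).mono
      Set.sdiff_subset Set.sdiff_subset
  have hcompl : (Set.range f)ᶜ = {v | ¬ OnCycle G v} ∪ ⋃ C : cycleSupports G, C.1 \ {f C} := by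
    ext x
    simp only [Set.mem_compl_iff, Set.mem_range, Set.mem_union, Set.mem_iUnion, Set.mem_ofPred_eq,
      onCycle_iff_exists_mem_cycleSupports]
    constructor
    · intro hx
      by_contra! h
      obtain ⟨⟨C, hC, hxC⟩, h⟩ := h
      exact h ⟨C, hC⟩ ⟨hxC, fun heq ↦ hx ⟨_, heq.symm⟩⟩
    · rintro (hx | ⟨C, hxC, hne⟩) ⟨C', rfl⟩
      · exact hx ⟨C', C'.2, hf C'⟩
      · exact hne (congrArg f <| Subtype.ext <|
          hG.pairwiseDisjoint_cycleSupports.elim_set C'.2 C.2 _ (hf C') hxC)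
  rw [hcompl]
  refine hΓ.union (isTiled_iUnion hcycle hdisj) (Set.disjoint_iUnion_right.mpr fun C ↦ ?_)
  exact Set.disjoint_left.mpr fun x hx hxC ↦
    hx (onCycle_iff_exists_mem_cycleSupports.mpr ⟨C, C.2, hxC.1⟩)

theorem CyclesPairwiseDisjoint.card_add_mul_cycleDim_le [Finite V] (hG : CyclesPairwiseDisjoint G)
    (hk : 0 < k) (hlen : ∀ (u : V) (w : G.Walk u u), w.IsCycle → k ∣ w.length - 1)
    (hΓ : IsTiled G k {v | ¬ OnCycle G v}) (hS : IsGenKIndep G k S) :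
    Nat.card V + k * cycleDim G ≤ k * Sᶜ.ncard + cycleDim G := by
  have hrep (C : cycleSupports G) : ∃ x ∈ C.1, x ∉ S := by
    obtain ⟨_, u, w, hw, rfl⟩ := C
    exact hS.exists_mem_support_notMem hk hw (hlen u w hw)
  choose f hf hfS using hrep
  have hinj : Function.Injective f := fun C C' h ↦ Subtype.ext <|
    hG.pairwiseDisjoint_cycleSupports.elim_set C.2 C'.2 _ (hf C) (h ▸ hf C')
  have hrange : (Set.range f).ncard = Nat.card (cycleSupports G) :=
    Set.ncard_range_of_injective hinj
  have hle := hG.cycleDim_le_card_cycleSupports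
  have hQ := (hG.isTiled_compl_range hlen hΓ hf).ncard_le hk hS
  have hcard := Set.ncard_add_ncard_compl (Set.range f)
  have hsub : ((Set.range f)ᶜ \ S).ncard + (Set.range f).ncard = Sᶜ.ncard := by
    rw [← Set.ncard_sdiff_add_ncard_of_subset (Set.range_subset_iff.mpr hfS : Set.range f ⊆ Sᶜ)]
    congr 2
    ext x
    simp [and_comm]
  obtain ⟨m, rfl⟩ := Nat.exists_eq_add_of_le' hk
  nlinarith

end Cycles

/-- If the cycles of `G` are pairwise vertex-disjoint, every cycle has length
`≡ 1 (mod k)`, and every connected component `T` of `Γ_G` (the graph obtained by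
deleting all cycle vertices) satisfies `k ∣ |V(T)|` and `T ∈ R^k_{|V(T)|/k}`, then
`α_k(G) = ((k-1)/k)·(n - ω(G))`. -/
theorem alphaK_eq_of_extremal {V : Type*} [Fintype V] (G : SimpleGraph V) (k : ℕ)
    (hk : 2 ≤ k)
    (h1 : CyclesPairwiseDisjoint G)
    (h2 : ∀ (u : V) (w : G.Walk u u), w.IsCycle → w.length % k = 1)
    (h3 : ∀ c : (G.induce {v : V | ¬ OnCycle G v}).ConnectedComponent,
      k ∣ Nat.card c.supp ∧
        InRk (G.induce {v : V | ¬ OnCycle G v}) k (Nat.card c.supp / k) c.supp) :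
    (alphaK G k : ℚ) = ((k : ℚ) - 1) / k * ((Nat.card V : ℚ) - cycleDim G) := by
  have hk0 : 0 < k := by omega
  have hlen (u : V) (w : G.Walk u u) (hw : w.IsCycle) : k ∣ w.length - 1 := by
    simpa only [h2 u w hw] using Nat.dvd_sub_mod (n := k) w.length
  have hΓ : IsTiled G k {v | ¬ OnCycle G v} :=
    (isTiled_univ_of_forall_supp fun c ↦ (h3 c).2.isTiled).of_induce
  obtain ⟨S, hS, hlower⟩ := exists_isGenKIndep_mul_ncard_compl_add_cycleDim_le G hk0
  have hupper {T : Set V} (hT : IsGenKIndep G k T) :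
      Nat.card V + k * cycleDim G ≤ k * Tᶜ.ncard + cycleDim G :=
    h1.card_add_mul_cycleDim_le hk0 hlen hΓ hT
  have hα : alphaK G k = S.ncard := hS.alphaK_eq_ncard fun T hT ↦
    Nat.le_of_mul_le_mul_left (by linarith [hupper hT] : k * Sᶜ.ncard ≤ k * Tᶜ.ncard) hk0
  have hcompl : (k * Sᶜ.ncard + cycleDim G : ℚ) = Nat.card V + k * cycleDim G := by
    exact_mod_cast hlower.antisymm (hupper hS)
  have hcard : (S.ncard + Sᶜ.ncard : ℚ) = Nat.card V := by
    exact_mod_cast Set.ncard_add_ncard_compl S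
  rw [hα]
  field_simp
  linear_combination k * hcard - hcompl
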